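/- (Identity (79) for the constant terms of Euler polynomials.) For every integer j ≥ 2, e₀(2j−1) = 1/4 − (1/2) · Σ_{i=2}^{j−1} C(2j−2, 2i−2) · e₀(2i−1), where C(p, q) denotes the binomial coefficient. Equivalently, the recurrence-defined coefficients γ₁ = −1/2, γ_{2j−1} = 1/4 − (1/2)Σ_{i=2}^{j−1} C(2j−2, 2i−2) γ_{2i−1} coincide with the constant terms of the odd Euler polynomials. -/

import Mathlib

/-- The constant term `E_k(0)` of the `k`-th Euler polynomial, for odd `k`,
expressed via Bernoulli numbers: `e₀(k) = 2 (1 − 2^(k+1)) B_{k+1} / (k+1)`. -/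
noncomputable def eulerConst (k : ℕ) : ℚ :=
  2 * (1 - 2 ^ (k + 1)) * bernoulli (k + 1) / (k + 1)

/-!
Write `e k` for `eulerConst k`. Since `∑ e n Xⁿ / n! = 2 / (exp X + 1)`, the coefficients satisfy
`∑ i, C(n, i) e i + e n = 0` for `n ≥ 1`. Subtracting this from its successor by Pascal's rule gives
`∑ i, C(n, i) e (i + 1) + e (n + 1) = e n`. For even `n = 2m ≥ 2`, all the `e k` with `k` even and
positive drop out because the odd Bernoulli numbers vanish, and what remains is the recurrence: the
term `i = 0` contributes `e 1 = -1/2` and the term `i = n` a second copy of `e (2m + 1)`.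
-/

open Finset PowerSeries
open scoped Nat

theorem sum_range_two_mul_add_one_of_odd_eq_zero {M : Type*} [AddCommMonoid M] {f : ℕ → M}
    (hf : ∀ k, Odd k → f k = 0) (n : ℕ) :
    ∑ k ∈ range (2 * n + 1), f k = ∑ k ∈ range (n + 1), f (2 * k) := by
  induction n with
  | zero => simp
  | succ n ih =>
    rw [mul_add_one, sum_range_succ, sum_range_succ, ih, hf _ (odd_two_mul_add_one n), add_zero,
      sum_range_succ _ (n + 1), mul_add_one]

section ExpGenSeries

variable {K : Type*} [Field K]

/-- The exponential generating function `∑ a n Xⁿ / n!` of a sequence `a`. It is meaningful in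
characteristic zero only: otherwise `n!` vanishes for large `n` and division by it gives `0`. -/
noncomputable def expGenSeries (a : ℕ → K) : K⟦X⟧ :=
  mk fun n => a n / n !

theorem coeff_expGenSeries (a : ℕ → K) (n : ℕ) : coeff n (expGenSeries a) = a n / n ! :=
  coeff_mk n _

theorem coeff_expGenSeries_mul_exp [Algebra ℚ K] (a : ℕ → K) (n : ℕ) :
    coeff n (expGenSeries a * exp K) = (∑ i ∈ range (n + 1), (n.choose i : K) * a i) / n ! := by
  have := algebraRat.charZero K
  rw [coeff_mul, Nat.sum_antidiagonal_eq_sum_range_succ_mk, sum_div]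
  refine sum_congr rfl fun i hi => ?_
  have h_factorial : (n ! : K) ≠ 0 := by exact_mod_cast n.factorial_ne_zero
  rw [coeff_expGenSeries, coeff_exp, Nat.cast_choose K (mem_range_succ_iff.mp hi), map_div₀,
    map_one, map_natCast]
  field_simp

end ExpGenSeries

theorem expGenSeries_bernoulli : expGenSeries bernoulli = bernoulliPowerSeries ℚ :=
  rfl

theorem X_mul_expGenSeries_eulerConst :
    X * expGenSeries eulerConst =
      2 * (bernoulliPowerSeries ℚ - rescale (2 : ℚ) (bernoulliPowerSeries ℚ)) := by
  ext n
  rw [← map_ofNat C 2, coeff_C_mul, map_sub, coeff_rescale, ← expGenSeries_bernoulli,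
    coeff_expGenSeries]
  cases n with
  | zero => simp
  | succ n =>
    rw [coeff_succ_X_mul, coeff_expGenSeries, eulerConst, Nat.factorial_succ]
    push_cast
    field_simp

theorem expGenSeries_eulerConst_mul_exp_add_one :
    expGenSeries eulerConst * (exp ℚ + 1) = 2 := by
  have hB : bernoulliPowerSeries ℚ * (exp ℚ - 1) = X := bernoulliPowerSeries_mul_exp_sub_one ℚ
  have hB₂ : rescale (2 : ℚ) (bernoulliPowerSeries ℚ) * (exp ℚ ^ 2 - 1) = 2 * X := by
    have hexp : exp ℚ ^ 2 = rescale (2 : ℚ) (exp ℚ) := exp_pow_eq_rescale_exp 2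
    rw [hexp, ← map_one (rescale (2 : ℚ)), ← map_sub, ← map_mul, hB, rescale_X, map_ofNat]
  have hexp_ne : exp ℚ - 1 ≠ 0 := right_ne_zero_of_mul (hB ▸ X_ne_zero)
  refine mul_left_cancel₀ (mul_ne_zero X_ne_zero hexp_ne) ?_
  linear_combination
    (exp ℚ ^ 2 - 1) * X_mul_expGenSeries_eulerConst + 2 * (exp ℚ + 1) * hB - 2 * hB₂

theorem eulerConst_one : eulerConst 1 = -1 / 2 := by
  norm_num [eulerConst, bernoulli_two]

theorem eulerConst_eq_zero_of_even {k : ℕ} (hk : Even k) (hk₀ : k ≠ 0) : eulerConst k = 0 := by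
  rw [eulerConst, bernoulli_eq_zero_of_odd hk.add_one (by lia), mul_zero, zero_div]

theorem sum_choose_mul_eulerConst_add {n : ℕ} (hn : n ≠ 0) :
    ∑ i ∈ range (n + 1), (n.choose i : ℚ) * eulerConst i + eulerConst n = 0 := by
  have h := congrArg (coeff n) expGenSeries_eulerConst_mul_exp_add_one
  rw [mul_add_one, map_add, coeff_expGenSeries_mul_exp, coeff_expGenSeries, ← add_div,
    ← map_ofNat C 2, coeff_C, if_neg hn] at h
  exact (div_eq_zero_iff.mp h).resolve_right (by exact_mod_cast n.factorial_ne_zero)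

theorem sum_choose_mul_eulerConst_succ_add {n : ℕ} (hn : n ≠ 0) :
    ∑ i ∈ range (n + 1), (n.choose i : ℚ) * eulerConst (i + 1) + eulerConst (n + 1) =
      eulerConst n := by
  have hpascal := sum_choose_succ_mul (fun i _ => eulerConst i) n
  linear_combination sum_choose_mul_eulerConst_add n.succ_ne_zero -
    sum_choose_mul_eulerConst_add hn - hpascal

theorem sum_choose_two_mul_mul_eulerConst_add {m : ℕ} (hm : m ≠ 0) :
    ∑ k ∈ range (m + 1), ((2 * m).choose (2 * k) : ℚ) * eulerConst (2 * k + 1) +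
      eulerConst (2 * m + 1) = 0 := by
  have h_odd (i : ℕ) (hi : Odd i) : ((2 * m).choose i : ℚ) * eulerConst (i + 1) = 0 := by
    rw [eulerConst_eq_zero_of_even hi.add_one i.succ_ne_zero, mul_zero]
  rw [← sum_range_two_mul_add_one_of_odd_eq_zero h_odd,
    sum_choose_mul_eulerConst_succ_add (by lia),
    eulerConst_eq_zero_of_even (even_two_mul m) (by lia)]

/-- (Identity (79).) For every `j ≥ 2`,
`e₀(2j−1) = 1/4 − (1/2) Σ_{i=2}^{j−1} C(2j−2, 2i−2) e₀(2i−1)`. -/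
theorem euler_constant_term_recurrence (j : ℕ) (hj : 2 ≤ j) :
    eulerConst (2 * j - 1) =
      1 / 4 - (1 / 2) * ∑ i ∈ Finset.Icc 2 (j - 1),
        ((2 * j - 2).choose (2 * i - 2) : ℚ) * eulerConst (2 * i - 1) := by
  obtain ⟨m, rfl⟩ := Nat.exists_eq_add_of_le' hj
  have h_reindex : ∑ i ∈ Icc 2 (m + 1),
        ((2 * (m + 2) - 2).choose (2 * i - 2) : ℚ) * eulerConst (2 * i - 1) =
      ∑ k ∈ range m,
        ((2 * (m + 1)).choose (2 * (k + 1)) : ℚ) * eulerConst (2 * (k + 1) + 1) := by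
    rw [← Ico_add_one_right_eq_Icc, sum_Ico_eq_sum_range]
    refine sum_congr rfl fun k _ => ?_
    congr 3 <;> lia
  have h := sum_choose_two_mul_mul_eulerConst_add m.succ_ne_zero
  rw [sum_range_succ, sum_range_succ'] at h
  simp only [mul_zero, zero_add, Nat.choose_zero_right, Nat.choose_self, Nat.cast_one, one_mul,
    eulerConst_one] at h
  rw [show m + 2 - 1 = m + 1 from rfl, h_reindex, show 2 * (m + 2) - 1 = 2 * (m + 1) + 1 by lia]
  linear_combination h / 2
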